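/- Boundary behaviour: let n ≥ 2, a ≥ 0, K ≥ 0, y ∈ (0,∞)^n, and let g(δ) = δ·( a + K·∑_{i=1}^n y_i/δ + ∏_{i=1}^n (1 + y_i/δ) − 1 ). Then g(δ) → +∞ as δ → 0⁺; and if in addition a > 0, then g(δ) → +∞ as δ → +∞. -/

import Mathlib

open Finset Filter

/-- The function `g(δ) = δ·( a + K·∑ yᵢ/δ + ∏(1 + yᵢ/δ) − 1 )`. -/
noncomputable def gfun {n : ℕ} (a K : ℝ) (y : Fin n → ℝ) (δ : ℝ) : ℝ :=
  δ * (a + K * ∑ i, y i / δ + ∏ i, (1 + y i / δ) - 1)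

/-!
Near `0`, the product is the only unbounded contribution: `δ · (K · ∑ yᵢ / δ)` does not depend
on `δ`, whereas `δ · ∏ (1 + yᵢ / δ) = δ^(1 - m) · ∏ (δ + yᵢ)` with `m ≥ 2` factors, those with
`yᵢ ≠ 0`. At `+∞`, the parenthesised factor of `g` tends to `a`, so `g(δ)` grows like `a · δ`.
-/

open scoped Topology

section OrderedField

variable {𝕜 ι : Type*} [Field 𝕜] {s : Finset ι} {y : ι → 𝕜}

theorem mul_prod_one_add_div (hs : s.Nonempty) {δ : 𝕜} (hδ : δ ≠ 0) :
    δ * ∏ i ∈ s, (1 + y i / δ) = δ⁻¹ ^ (#s - 1) * ∏ i ∈ s, (δ + y i) := by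
  have factor (i : ι) : 1 + y i / δ = δ⁻¹ * (δ + y i) := by field_simp
  obtain ⟨m, hm⟩ := Nat.exists_eq_add_one.mpr hs.card_pos
  simp only [factor, prod_mul_distrib, prod_const, hm, Nat.add_sub_cancel]
  rw [pow_succ', ← mul_assoc, mul_inv_cancel_left₀ hδ]

variable [LinearOrder 𝕜] [IsStrictOrderedRing 𝕜] [TopologicalSpace 𝕜] [OrderTopology 𝕜]

theorem tendsto_mul_prod_one_add_div_nhdsGT_zero (hs : 2 ≤ #s) (hy : 0 < ∏ i ∈ s, y i) :
    Tendsto (fun δ ↦ δ * ∏ i ∈ s, (1 + y i / δ)) (𝓝[>] 0) atTop := by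
  have power : Tendsto (fun δ : 𝕜 ↦ δ⁻¹ ^ (#s - 1)) (𝓝[>] 0) atTop :=
    (tendsto_pow_atTop (by omega)).comp tendsto_inv_nhdsGT_zero
  have shifted : Tendsto (fun δ ↦ ∏ i ∈ s, (δ + y i)) (𝓝[>] 0) (𝓝 (∏ i ∈ s, y i)) :=
    tendsto_nhdsWithin_of_tendsto_nhds <|
      Continuous.tendsto' (by fun_prop) _ _ (by simp only [zero_add])
  refine (power.atTop_mul_pos hy shifted).congr' ?_
  filter_upwards [self_mem_nhdsWithin] with δ hδ
  exact (mul_prod_one_add_div (card_pos.mp (by omega)) (ne_of_gt hδ)).symm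

theorem tendsto_sum_div_atTop_zero : Tendsto (fun δ ↦ ∑ i ∈ s, y i / δ) atTop (𝓝 0) := by
  simpa using tendsto_finsetSum s fun i _ ↦ tendsto_id.const_div_atTop (y i)

theorem tendsto_prod_one_add_div_atTop_one :
    Tendsto (fun δ ↦ ∏ i ∈ s, (1 + y i / δ)) atTop (𝓝 1) := by
  simpa using tendsto_finsetProd s fun i _ ↦
    (tendsto_id.const_div_atTop (y i)).const_add 1

end OrderedField

section Gfun

variable {n : ℕ} {a K : ℝ} {y : Fin n → ℝ}

theorem gfun_eq_mul_prod_add {δ : ℝ} (hδ : δ ≠ 0) :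
    gfun a K y δ =
      δ * ∏ i with y i ≠ 0, (1 + y i / δ) + (δ * (a - 1) + K * ∑ i, y i) := by
  have prod_support : ∏ i with y i ≠ 0, (1 + y i / δ) = ∏ i, (1 + y i / δ) :=
    prod_filter_of_ne fun i _ hi hyi ↦ hi (by simp [hyi])
  rw [gfun, prod_support, ← sum_div]
  field_simp
  ring

theorem tendsto_gfun_nhdsGT_zero (hn : 2 ≤ #{i | y i ≠ 0}) (hy : 0 < ∏ i with y i ≠ 0, y i) :
    Tendsto (gfun a K y) (𝓝[>] 0) atTop := by
  have bounded_part : Tendsto (fun δ : ℝ ↦ δ * (a - 1) + K * ∑ i, y i) (𝓝[>] 0)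
      (𝓝 (K * ∑ i, y i)) :=
    tendsto_nhdsWithin_of_tendsto_nhds <| Continuous.tendsto' (by fun_prop) _ _ (by simp)
  refine ((tendsto_mul_prod_one_add_div_nhdsGT_zero hn hy).atTop_add bounded_part).congr' ?_
  filter_upwards [self_mem_nhdsWithin] with δ hδ
  exact (gfun_eq_mul_prod_add (ne_of_gt hδ)).symm

theorem tendsto_gfun_atTop (ha : 0 < a) : Tendsto (gfun a K y) atTop atTop := by
  have factor : Tendsto (fun δ ↦ a + K * ∑ i, y i / δ + ∏ i, (1 + y i / δ) - 1) atTop (𝓝 a) := by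
    simpa using (((tendsto_sum_div_atTop_zero.const_mul K).const_add a).add
      tendsto_prod_one_add_div_atTop_one).sub_const 1
  exact tendsto_id.atTop_mul_pos ha factor

end Gfun

theorem gfun_boundary_behaviour_general {n : ℕ} (a K : ℝ) (y : Fin n → ℝ) :
    (2 ≤ #{i | y i ≠ 0} → 0 < ∏ i with y i ≠ 0, y i →
      Tendsto (gfun a K y) (𝓝[>] 0) atTop) ∧
    (0 < a → Tendsto (gfun a K y) atTop atTop) :=
  ⟨tendsto_gfun_nhdsGT_zero, tendsto_gfun_atTop⟩

/-- boundary behaviour of `g`: it blows up as `δ → 0⁺`, and also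
as `δ → +∞` provided `a > 0`. -/
theorem gfun_boundary_behaviour (n : ℕ) (hn : 2 ≤ n)
    (a K : ℝ) (ha : 0 ≤ a) (hK : 0 ≤ K)
    (y : Fin n → ℝ) (hy : ∀ i, 0 < y i) :
    Tendsto (gfun a K y) (nhdsWithin 0 (Set.Ioi 0)) atTop ∧
    (0 < a → Tendsto (gfun a K y) atTop atTop) :=
  (gfun_boundary_behaviour_general a K y).imp_left fun near_zero ↦
    near_zero (by simpa [(hy _).ne'] using hn) (prod_pos fun i _ ↦ hy i)
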